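/- Assume P does not lie on a median of ABC (a line joining a vertex to the midpoint of the opposite side). Then the center Z of the conic C_P lies on the nine-point conic N_H of the quadrangle ABCH, and K⁻¹(Z) lies on the circumconic C̃_O. -/

import Mathlib

noncomputable section

/-- The real affine plane. -/
abbrev Pt : Type := ℝ × ℝ

/-- `u` and `v` are parallel vectors (the zero vector is parallel to everything). -/
def Par (u v : Pt) : Prop := ∃ t : ℝ, u = t • v ∨ v = t • u

/-- The centroid of the triangle `ABC`. -/
def cent (A B C : Pt) : Pt := (3⁻¹ : ℝ) • (A + B + C)

/-- The homothety with center `Z` and ratio `r`. -/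
def homoth (Z : Pt) (r : ℝ) (X : Pt) : Pt := Z + r • (X - Z)

/-- The value at `p` of the quadratic polynomial with coefficient vector `c`. -/
def qval (c : Fin 6 → ℝ) (p : Pt) : ℝ :=
  c 0 * p.1 ^ 2 + c 1 * p.1 * p.2 + c 2 * p.2 ^ 2 + c 3 * p.1 + c 4 * p.2 + c 5

/-- `S` is a conic: the zero locus of a real polynomial of total degree 2. -/
def IsConic (S : Set Pt) : Prop :=
  ∃ c : Fin 6 → ℝ, ¬(c 0 = 0 ∧ c 1 = 0 ∧ c 2 = 0) ∧ S = {p | qval c p = 0}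

/-- `Z` is a center of symmetry of `S`. -/
def IsCenterOf (Z : Pt) (S : Set Pt) : Prop :=
  ∀ p ∈ S, (2 : ℝ) • Z - p ∈ S

/-- The gradient at `p` of the quadratic polynomial with coefficients `c`. -/
def qgrad (c : Fin 6 → ℝ) (p : Pt) : Pt :=
  (2 * c 0 * p.1 + c 1 * p.2 + c 3, c 1 * p.1 + 2 * c 2 * p.2 + c 4)

/-- The line through `X` and `Y`. -/
def lineThru (X Y : Pt) : Set Pt := {p | ∃ t : ℝ, p = X + t • (Y - X)}

/-- `L` is the tangent line at the nonsingular point `p` of the conic with coefficients `c`. -/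
def IsTangentLineAt (c : Fin 6 → ℝ) (L : Set Pt) (p : Pt) : Prop :=
  qval c p = 0 ∧ qgrad c p ≠ 0 ∧
  L = {q | (qgrad c p).1 * (q.1 - p.1) + (qgrad c p).2 * (q.2 - p.2) = 0}

/-- The point with barycentric coordinates `(u, v, w)` with respect to `ABC`. -/
def bary (A B C : Pt) (u v w : ℝ) : Pt := u • A + v • B + w • C

/-- The determinant of two plane vectors. -/
def cross (u v : Pt) : ℝ := u.1 * v.2 - u.2 * v.1

/-- The leading quadratic form of the polynomial with coefficient vector `c`. -/
def qform (c : Fin 6 → ℝ) (p : Pt) : ℝ :=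
  c 0 * p.1 ^ 2 + c 1 * p.1 * p.2 + c 2 * p.2 ^ 2

theorem bary_rotate (A B C : Pt) (u v w : ℝ) : bary B C A v w u = bary A B C u v w := by
  simp only [bary]; abel

theorem cross_eq_zero_of_par {u v : Pt} (h : Par u v) : cross u v = 0 := by
  obtain ⟨t, rfl | rfl⟩ := h <;> simp [cross] <;> ring

theorem cross_eq_zero_of_collinear {X Y W : Pt} (h : Collinear ℝ {X, Y, W}) :
    cross (Y - X) (W - X) = 0 := by
  obtain ⟨v, hv⟩ := (collinear_iff_of_mem (p₀ := X) (by simp)).1 h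
  obtain ⟨r, hr⟩ := hv Y (by simp)
  obtain ⟨t, ht⟩ := hv W (by simp)
  subst hr ht
  simp [cross]; ring

theorem cross_ne_zero_of_affineIndependent {A B C : Pt}
    (h : AffineIndependent ℝ ![A, B, C]) : cross (B - A) (C - A) ≠ 0 := by
  intro h0
  rw [affineIndependent_iff_not_collinear_set] at h
  apply h
  rw [collinear_iff_of_mem (p₀ := A) (by simp)]
  by_cases hB : B = A
  · refine ⟨C - A, fun p hp => ?_⟩
    rcases hp with rfl | rfl | rfl
    · exact ⟨0, by simp⟩
    · exact ⟨0, by simp [hB]⟩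
    · exact ⟨1, by simp⟩
  · refine ⟨B - A, fun p hp => ?_⟩
    rcases hp with rfl | rfl | rfl
    · exact ⟨0, by simp⟩
    · exact ⟨1, by simp⟩
    · simp only [cross, Prod.fst_sub, Prod.snd_sub] at h0
      by_cases h1 : B.1 - A.1 = 0
      · have h2 : B.2 - A.2 ≠ 0 := fun h2 =>
          hB (Prod.ext (sub_eq_zero.1 h1) (sub_eq_zero.1 h2))
        refine ⟨(p.2 - A.2) / (B.2 - A.2), Prod.ext ?_ ?_⟩
        · simp; field_simp; linear_combination -h0
        · simp; field_simp; ring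
      · refine ⟨(p.1 - A.1) / (B.1 - A.1), Prod.ext ?_ ?_⟩
        · simp; field_simp; ring
        · simp; field_simp; linear_combination h0

theorem cross_rotate (A B C : Pt) : cross (C - B) (A - B) = cross (B - A) (C - A) := by
  simp [cross]; ring

theorem exists_bary {A B C : Pt} (h : cross (B - A) (C - A) ≠ 0) (X : Pt) :
    ∃ u v w : ℝ, u + v + w = 1 ∧ X = bary A B C u v w := by
  set d := cross (B - A) (C - A) with hd
  refine ⟨1 - cross (X - A) (C - A) / d - cross (B - A) (X - A) / d,
    cross (X - A) (C - A) / d, cross (B - A) (X - A) / d, by ring, Prod.ext ?_ ?_⟩ <;>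
  · simp only [bary, Prod.fst_add, Prod.snd_add, Prod.smul_fst, Prod.smul_snd, smul_eq_mul]
    field_simp
    simp only [hd, cross, Prod.fst_sub, Prod.snd_sub]
    ring

theorem cross_bary (A B C : Pt) {u v w u' v' w' : ℝ} (h : u + v + w = 0)
    (h' : u' + v' + w' = 0) :
    cross (bary A B C u v w) (bary A B C u' v' w') =
      cross (B - A) (C - A) * (v * w' - w * v') := by
  obtain rfl : u = -v - w := by linarith
  obtain rfl : u' = -v' - w' := by linarith
  simp [cross, bary]; ring

theorem bary_sub (A B C : Pt) (u v w u' v' w' : ℝ) :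
    bary A B C u v w - bary A B C u' v' w' = bary A B C (u - u') (v - v') (w - w') := by
  simp only [bary]; module

theorem bary_sub_left (A B C : Pt) (u v w : ℝ) :
    bary A B C u v w - A = bary A B C (u - 1) v w := by
  simp only [bary]; module

theorem midpoint_eq_bary (A B C : Pt) : midpoint ℝ B C = bary A B C 0 (1 / 2) (1 / 2) := by
  simp [midpoint_eq_smul_add, bary]

/-- The trace on `BC` of the cevian through `(u : v : w)`. -/
theorem trace_coords {A B C D : Pt} {u v w : ℝ} (h : cross (B - A) (C - A) ≠ 0)
    (hs : u + v + w = 1) (h₁ : Collinear ℝ {A, bary A B C u v w, D})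
    (h₂ : Collinear ℝ {B, C, D}) :
    ∃ d₂ d₃ : ℝ, d₂ + d₃ = 1 ∧ D = bary A B C 0 d₂ d₃ ∧ d₂ * (v + w) = v ∧ d₃ * (v + w) = w := by
  obtain ⟨d₁, d₂, d₃, hd, rfl⟩ := exists_bary h D
  have e₁ := cross_eq_zero_of_collinear h₁
  have e₂ := cross_eq_zero_of_collinear h₂
  have hd₁ : d₁ = 0 := by
    have hC : C - B = bary A B C 0 (-1) 1 := by simp only [bary]; module
    have hDB : bary A B C d₁ d₂ d₃ - B = bary A B C d₁ (d₂ - 1) d₃ := by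
      simp only [bary]; module
    rw [hC, hDB, cross_bary _ _ _ (by ring) (by linarith)] at e₂
    have := (mul_eq_zero.1 e₂).resolve_left h
    linarith
  subst hd₁
  have e₃ : v * d₃ - w * d₂ = 0 := by
    rw [bary_sub_left, bary_sub_left, cross_bary _ _ _ (by linarith) (by linarith)] at e₁
    have := (mul_eq_zero.1 e₁).resolve_left h
    linarith
  exact ⟨d₂, d₃, by linarith, rfl, by linear_combination v * hd - e₃,
    by linear_combination w * hd + e₃⟩

/-- The direction of the line joining the isotomcomplement `Q` of `P` to the trace `D` of `P`. -/
theorem par_trace_sub_isotomcomplement {A B C D Q : Pt} {x y z s u v w : ℝ}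
    (h : cross (B - A) (C - A) ≠ 0) (hsum : x + y + z = 1) (hx1 : x ≠ 1)
    (hs : s = x * y + y * z + z * x) (hst : s ≠ 0)
    (hQ : Q = bary A B C (x * (y + z) / (2 * s)) (y * (z + x) / (2 * s)) (z * (x + y) / (2 * s)))
    (hD : Collinear ℝ {A, bary A B C x y z, D} ∧ Collinear ℝ {B, C, D})
    (huvw : u + v + w = 0) (hpar : Par (bary A B C u v w) (D - Q)) :
    v * (z * (y ^ 2 - s)) = w * (y * (z ^ 2 - s)) := by
  obtain ⟨d₂, d₃, hd, rfl, h₂, h₃⟩ := trace_coords h hsum hD.1 hD.2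
  have e := cross_eq_zero_of_par hpar
  have hyz : y + z ≠ 0 := fun h0 => hx1 (by linarith)
  rw [hQ, bary_sub, cross_bary _ _ _ huvw
    (by field_simp; linear_combination 2 * s * hd + 2 * hs)] at e
  have e' := (mul_eq_zero.1 e).resolve_left h
  rw [eq_div_of_mul_eq hyz h₂, eq_div_of_mul_eq hyz h₃] at e'
  field_simp at e'
  linear_combination -e' + (v * z - w * y) * hs

theorem qval_bary (c : Fin 6 → ℝ) (A B C : Pt) {u v w : ℝ} (h : u + v + w = 1) :
    qval c (bary A B C u v w) = u * qval c A + v * qval c B + w * qval c C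
      - v * w * qform c (B - C) - w * u * qform c (C - A) - u * v * qform c (A - B) := by
  obtain rfl : u = 1 - v - w := by linarith
  simp [qval, qform, bary]; ring

/-- The pair of parallel lines consisting of `AB` and the parallel to `AB` through `C`. -/
def parallelPair (A B C : Pt) : Set Pt :=
  {p | cross (B - A) (p - A) * (cross (B - A) (p - A) - cross (B - A) (C - A)) = 0}

theorem isConic_parallelPair {A B C : Pt} (h : cross (B - A) (C - A) ≠ 0) :
    IsConic (parallelPair A B C) := by
  set d := cross (B - A) (C - A) with hd
  let m := B.1 - A.1
  let n := B.2 - A.2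
  let k := n * A.1 - m * A.2
  refine ⟨![n ^ 2, -2 * m * n, m ^ 2, -2 * n * k + n * d, 2 * m * k - m * d, k ^ 2 - k * d], ?_, ?_⟩
  · rintro ⟨h₀, -, h₂⟩
    have hn : B.2 - A.2 = 0 := by simpa [n] using h₀
    have hm : B.1 - A.1 = 0 := by simpa [m] using h₂
    exact h (by simp [hd, cross, hn, hm])
  · ext p
    have : cross (B - A) (p - A) = m * p.2 - n * p.1 + k := by
      simp [cross, m, n, k]; ring
    simp only [parallelPair, Set.mem_ofPred_eq, qval, this, ← hd]
    refine Eq.congr ?_ rfl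
    simp [Matrix.cons_val]
    ring

theorem isCenterOf_parallelPair (A B C : Pt) :
    IsCenterOf (midpoint ℝ B C) (parallelPair A B C) := by
  intro p hp
  have : cross (B - A) ((2 : ℝ) • midpoint ℝ B C - p - A) =
      cross (B - A) (C - A) - cross (B - A) (p - A) := by
    simp [cross, midpoint_eq_smul_add]; ring
  simp only [parallelPair, Set.mem_ofPred_eq] at hp ⊢
  rw [this]
  linear_combination hp

theorem parallelPair_ne_swap {A B C : Pt} (h : cross (B - A) (C - A) ≠ 0) :
    parallelPair A B C ≠ parallelPair A C B := by
  intro he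
  have hm : A + (2 : ℝ) • (B - A) ∈ parallelPair A B C := by
    simp [parallelPair, cross]; left; ring
  rw [he] at hm
  simp only [parallelPair, Set.mem_ofPred_eq] at hm
  have e₁ : cross (C - A) (A + (2 : ℝ) • (B - A) - A) = -2 * cross (B - A) (C - A) := by
    simp [cross]; ring
  have e₂ : cross (C - A) (B - A) = -cross (B - A) (C - A) := by simp [cross]; ring
  rw [e₁, e₂] at hm
  apply h
  have : cross (B - A) (C - A) ^ 2 = 0 := by linear_combination hm / 2
  exact pow_eq_zero_iff two_ne_zero |>.1 this

/-- There are several circumconics centered at the midpoint of a side. -/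
theorem not_unique_circumconic_center_midpoint {A B C : Pt} (h : cross (B - A) (C - A) ≠ 0)
    {S₀ : Set Pt} (huniq : ∀ S : Set Pt, IsConic S → A ∈ S → B ∈ S → C ∈ S →
      IsCenterOf (midpoint ℝ B C) S → S = S₀) : False := by
  have h' : cross (C - A) (B - A) ≠ 0 := fun h0 => h (by
    simp only [cross] at h0 ⊢; linear_combination -h0)
  apply parallelPair_ne_swap h
  rw [huniq _ (isConic_parallelPair h) (by simp [parallelPair, cross])
      (by simp [parallelPair, cross]; left; ring) (by simp [parallelPair])
      (isCenterOf_parallelPair A B C),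
    huniq _ (isConic_parallelPair h') (by simp [parallelPair, cross])
      (by simp [parallelPair]) (by simp [parallelPair, cross]; left; ring)
      (midpoint_comm (R := ℝ) B C ▸ isCenterOf_parallelPair A C B)]

/-- The center of a circumconic satisfies the vanishing gradient equations. -/
theorem center_equations {c : Fin 6 → ℝ} {A B C : Pt} {u v w p q r : ℝ}
    (hA : qval c A = 0) (hB : qval c B = 0) (hC : qval c C = 0) (hs : u + v + w = 1)
    (hp : p = qform c (B - C)) (hq : q = qform c (C - A)) (hr : r = qform c (A - B))
    (hcen : IsCenterOf (bary A B C u v w) {P | qval c P = 0}) :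
    q * w + r * v = 2 * (p * v * w + q * w * u + r * u * v) ∧
    r * u + p * w = 2 * (p * v * w + q * w * u + r * u * v) ∧
    p * v + q * u = 2 * (p * v * w + q * w * u + r * u * v) := by
  have eA : (2 : ℝ) • bary A B C u v w - A = bary A B C (2 * u - 1) (2 * v) (2 * w) := by
    simp only [bary]; module
  have eB : (2 : ℝ) • bary A B C u v w - B = bary A B C (2 * u) (2 * v - 1) (2 * w) := by
    simp only [bary]; module
  have eC : (2 : ℝ) • bary A B C u v w - C = bary A B C (2 * u) (2 * v) (2 * w - 1) := by
    simp only [bary]; module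
  have fA : qval c ((2 : ℝ) • bary A B C u v w - A) = 0 := hcen A hA
  have fB : qval c ((2 : ℝ) • bary A B C u v w - B) = 0 := hcen B hB
  have fC : qval c ((2 : ℝ) • bary A B C u v w - C) = 0 := hcen C hC
  rw [eA, qval_bary _ _ _ _ (by linarith), hA, hB, hC, ← hp, ← hq, ← hr] at fA
  rw [eB, qval_bary _ _ _ _ (by linarith), hA, hB, hC, ← hp, ← hq, ← hr] at fB
  rw [eC, qval_bary _ _ _ _ (by linarith), hA, hB, hC, ← hp, ← hq, ← hr] at fC
  refine ⟨?_, ?_, ?_⟩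
  · linear_combination fA / 2
  · linear_combination fB / 2
  · linear_combination fC / 2

/-- The normalized coordinates of a point from the directions of its cevians. -/
theorem coord_of_cevians {x y z s h₁ h₂ h₃ : ℝ} (hh : h₁ + h₂ + h₃ = 1)
    (hsum : x + y + z = 1) (hs : s = x * y + y * z + z * x)
    (e₂ : h₃ * (x * (z ^ 2 - s)) = h₁ * (z * (x ^ 2 - s)))
    (e₃ : h₁ * (y * (x ^ 2 - s)) = h₂ * (x * (y ^ 2 - s))) :
    4 * s * (x * y * z) * h₁ = x * (y ^ 2 - s) * (z ^ 2 - s) := by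
  have key : x * (y ^ 2 - s) * (z ^ 2 - s) + y * (z ^ 2 - s) * (x ^ 2 - s)
      + z * (x ^ 2 - s) * (y ^ 2 - s) = 4 * s * (x * y * z) := by
    obtain rfl : z = 1 - x - y := by linarith
    rw [hs]; ring
  linear_combination (-h₁) * key + x * (y ^ 2 - s) * (z ^ 2 - s) * hh + (z ^ 2 - s) * e₃
    - (y ^ 2 - s) * e₂

/-- A quadratic form `∑ a u² - ∑ (b + c) v w` vanishing at the feet and at the midpoints of a
quadrangle is determined up to a factor. -/
theorem weights_eq {a b c h₁ h₂ h₃ : ℝ} (hs : h₁ + h₂ + h₃ = 1)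
    (f₁ : (h₂ - h₃) * (b * h₂ - c * h₃) = 0) (f₂ : (h₃ - h₁) * (c * h₃ - a * h₁) = 0)
    (f₃ : (h₁ - h₂) * (a * h₁ - b * h₂) = 0)
    (m₁ : (h₁ + 1) * (2 * (a * h₁) - b * h₂ - c * h₃) = 0)
    (m₂ : (h₂ + 1) * (2 * (b * h₂) - c * h₃ - a * h₁) = 0) :
    a * h₁ = b * h₂ ∧ a * h₁ = c * h₃ := by
  by_cases h12 : h₁ = h₂
  · by_cases h23 : h₂ = h₃
    · have h : h₁ = 1 / 3 := by linarith
      have h' : h₂ = 1 / 3 := by linarith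
      rw [mul_eq_zero] at m₁ m₂
      have m₁' := m₁.resolve_left (by rw [h]; norm_num)
      have m₂' := m₂.resolve_left (by rw [h']; norm_num)
      constructor <;> linarith
    · have h31 : h₃ - h₁ ≠ 0 := fun h => h23 (by linarith)
      have := (mul_eq_zero.1 f₁).resolve_left (sub_ne_zero.2 h23)
      have := (mul_eq_zero.1 f₂).resolve_left h31
      constructor <;> linarith
  · have g₃ := (mul_eq_zero.1 f₃).resolve_left (sub_ne_zero.2 h12)
    refine ⟨by linarith, ?_⟩
    by_cases h31 : h₃ = h₁
    · have := (mul_eq_zero.1 f₁).resolve_left (fun h => h12 (by linarith))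
      linarith
    · have := (mul_eq_zero.1 f₂).resolve_left (sub_ne_zero.2 h31)
      linarith

/-- The center of the conic `ABCPQ` annihilates the equation of the nine-point conic. -/
theorem center_mem_nine_point_form {x y z p q r u v w k : ℝ} (hsum : x + y + z = 1)
    (hx0 : x ≠ 0) (hy0 : y ≠ 0) (hz0 : z ≠ 0) (hx1 : x ≠ 1) (hy1 : y ≠ 1) (hz1 : z ≠ 1)
    (hxy : x ≠ y) (hyz : y ≠ z) (hxz : x ≠ z)
    (hP : p * y * z + q * z * x + r * x * y = 0)
    (hQ : p * (y * (z + x)) * (z * (x + y)) + q * (z * (x + y)) * (x * (y + z)) +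
      r * (x * (y + z)) * (y * (z + x)) = 0)
    (hne : ¬(p = 0 ∧ q = 0 ∧ r = 0))
    (e₁ : q * w + r * v = k) (e₂ : r * u + p * w = k) (e₃ : p * v + q * u = k)
    (s : ℝ) (hs : s = x * y + y * z + z * x) :
    y * z * (x ^ 2 - s) * u ^ 2 + z * x * (y ^ 2 - s) * v ^ 2 + x * y * (z ^ 2 - s) * w ^ 2
      - (z * x * (y ^ 2 - s) + x * y * (z ^ 2 - s)) * v * w
      - (x * y * (z ^ 2 - s) + y * z * (x ^ 2 - s)) * w * u
      - (y * z * (x ^ 2 - s) + z * x * (y ^ 2 - s)) * u * v = 0 := by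
  have hyz1 : y + z ≠ 0 := fun h => hx1 (by linarith)
  have hzx1 : z + x ≠ 0 := fun h => hy1 (by linarith)
  have hxy1 : x + y ≠ 0 := fun h => hz1 (by linarith)
  have n₁ : x * (y ^ 2 - z ^ 2) ≠ 0 := by
    rw [sq_sub_sq]; exact mul_ne_zero hx0 (mul_ne_zero hyz1 (sub_ne_zero.2 hyz))
  have n₂ : y * (z ^ 2 - x ^ 2) ≠ 0 := by
    rw [sq_sub_sq]; exact mul_ne_zero hy0 (mul_ne_zero hzx1 (sub_ne_zero.2 hxz.symm))
  have n₃ : z * (x ^ 2 - y ^ 2) ≠ 0 := by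
    rw [sq_sub_sq]; exact mul_ne_zero hz0 (mul_ne_zero hxy1 (sub_ne_zero.2 hxy))
  have c₃ : p * (y * (z ^ 2 - x ^ 2)) = q * (x * (y ^ 2 - z ^ 2)) := by
    apply mul_left_cancel₀ hz0
    linear_combination -hQ + (y + z) * (z + x) * hP
  have c₂ : p * (z * (x ^ 2 - y ^ 2)) = r * (x * (y ^ 2 - z ^ 2)) := by
    apply mul_left_cancel₀ hy0
    linear_combination hQ - (y + z) * (x + y) * hP
  obtain ⟨l, hl⟩ : ∃ l, p = l * (x * (y ^ 2 - z ^ 2)) := ⟨p / _, (div_mul_cancel₀ _ n₁).symm⟩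
  have hq : q = l * (y * (z ^ 2 - x ^ 2)) := by
    apply mul_right_cancel₀ n₁; rw [← c₃, hl]; ring
  have hr : r = l * (z * (x ^ 2 - y ^ 2)) := by
    apply mul_right_cancel₀ n₁; rw [← c₂, hl]; ring
  have hl0 : l ≠ 0 := fun h => hne ⟨by simp [hl, h], by simp [hq, h], by simp [hr, h]⟩
  have hpqr : 2 * (p * q * r) ≠ 0 := by
    rw [hl, hq, hr]; positivity
  have hu : 2 * (p * q * r) * u = k * (p * (q + r - p)) := by
    linear_combination p * (-p * e₁ + q * e₂ + r * e₃)
  have hv : 2 * (p * q * r) * v = k * (q * (r + p - q)) := by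
    linear_combination q * (p * e₁ - q * e₂ + r * e₃)
  have hw : 2 * (p * q * r) * w = k * (r * (p + q - r)) := by
    linear_combination r * (p * e₁ + q * e₂ - r * e₃)
  obtain ⟨m, hm⟩ : ∃ m, m = k / (2 * (p * q * r)) * l ^ 2 := ⟨_, rfl⟩
  have hu' : u = m * (x * (y ^ 2 - z ^ 2) *
      (y * (z ^ 2 - x ^ 2) + z * (x ^ 2 - y ^ 2) - x * (y ^ 2 - z ^ 2))) := by
    rw [hm, eq_div_of_mul_eq hpqr ((mul_comm _ _).trans hu), div_mul_eq_mul_div,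
      div_mul_eq_mul_div]
    congr 1; rw [hl, hq, hr]; ring
  have hv' : v = m * (y * (z ^ 2 - x ^ 2) *
      (z * (x ^ 2 - y ^ 2) + x * (y ^ 2 - z ^ 2) - y * (z ^ 2 - x ^ 2))) := by
    rw [hm, eq_div_of_mul_eq hpqr ((mul_comm _ _).trans hv), div_mul_eq_mul_div,
      div_mul_eq_mul_div]
    congr 1; rw [hl, hq, hr]; ring
  have hw' : w = m * (z * (x ^ 2 - y ^ 2) *
      (x * (y ^ 2 - z ^ 2) + y * (z ^ 2 - x ^ 2) - z * (x ^ 2 - y ^ 2))) := by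
    rw [hm, eq_div_of_mul_eq hpqr ((mul_comm _ _).trans hw), div_mul_eq_mul_div,
      div_mul_eq_mul_div]
    congr 1; rw [hl, hq, hr]; ring
  rw [hu', hv', hw', hs]
  ring

theorem qform_eq_of_midpoint {c : Fin 6 → ℝ} {B C : Pt} (h : qval c (midpoint ℝ B C) = 0) :
    qform c (B - C) = 2 * (qval c B + qval c C) := by
  rw [midpoint_eq_bary 0, qval_bary _ _ _ _ (by norm_num)] at h
  linear_combination -4 * h

/-- The condition imposed by the foot on `BC` on a conic through the midpoint of `BC`. -/
theorem foot_condition {c : Fin 6 → ℝ} {A B C F : Pt} {h₁ h₂ h₃ : ℝ}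
    (hd : cross (B - A) (C - A) ≠ 0) (hh : h₁ + h₂ + h₃ = 1)
    (hm : qval c (midpoint ℝ B C) = 0)
    (hF : Collinear ℝ {A, bary A B C h₁ h₂ h₃, F} ∧ Collinear ℝ {B, C, F}) (hc : qval c F = 0) :
    (h₂ - h₃) * (qval c B * h₂ - qval c C * h₃) = 0 := by
  obtain ⟨v, w, hvw, rfl, hv, hw⟩ := trace_coords hd hh hF.1 hF.2
  rw [qval_bary _ _ _ _ (by linarith), qform_eq_of_midpoint hm] at hc
  obtain rfl : w = 1 - v := by linarith
  have e₁ : h₂ - h₃ = (2 * v - 1) * (h₂ + h₃) := by linear_combination hw - hv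
  have e₂ : qval c B * h₂ - qval c C * h₃ =
      (qval c B * v - qval c C * (1 - v)) * (h₂ + h₃) := by
    linear_combination qval c C * hw - qval c B * hv
  rw [e₁, e₂]
  linear_combination (h₂ + h₃) ^ 2 * hc

/-- The condition imposed by the midpoint of `AH` on a conic through the midpoints of the sides. -/
theorem midpoint_condition {c : Fin 6 → ℝ} {A B C : Pt} {h₁ h₂ h₃ : ℝ}
    (hh : h₁ + h₂ + h₃ = 1) (hD : qval c (midpoint ℝ B C) = 0)
    (hE : qval c (midpoint ℝ C A) = 0) (hF : qval c (midpoint ℝ A B) = 0)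
    (hf : (h₂ - h₃) * (qval c B * h₂ - qval c C * h₃) = 0)
    (hm : qval c (midpoint ℝ A (bary A B C h₁ h₂ h₃)) = 0) :
    (h₁ + 1) * (2 * (qval c A * h₁) - qval c B * h₂ - qval c C * h₃) = 0 := by
  have e : midpoint ℝ A (bary A B C h₁ h₂ h₃) =
      bary A B C ((1 + h₁) / 2) (h₂ / 2) (h₃ / 2) := by
    simp only [midpoint_eq_smul_add, bary, invOf_eq_inv]; module
  rw [e, qval_bary _ _ _ _ (by linarith), qform_eq_of_midpoint hD, qform_eq_of_midpoint hE,
    qform_eq_of_midpoint hF] at hm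
  obtain rfl : h₁ = 1 - h₂ - h₃ := by linarith
  linear_combination 4 * hm - hf

/-- A point on the form `∑ a u² - ∑ (b + c) v w` has its anticomplement on the circumconic whose
center has anticomplement `(1 / a : 1 / b : 1 / c)`. -/
theorem anticomplement_mem_circumconic_form {a b c p q r o₁ o₂ o₃ u v w k m : ℝ}
    (ho : o₁ + o₂ + o₃ = 1) (hu : u + v + w = 1) (hm : m ≠ 0)
    (ha : a * (1 - 2 * o₁) = m) (hb : b * (1 - 2 * o₂) = m) (hc : c * (1 - 2 * o₃) = m)
    (e₁ : q * o₃ + r * o₂ = k) (e₂ : r * o₁ + p * o₃ = k) (e₃ : p * o₂ + q * o₁ = k)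
    (hN : a * u ^ 2 + b * v ^ 2 + c * w ^ 2 - (b + c) * v * w - (c + a) * w * u
      - (a + b) * u * v = 0) :
    p * (1 - 2 * v) * (1 - 2 * w) + q * (1 - 2 * w) * (1 - 2 * u)
      + r * (1 - 2 * u) * (1 - 2 * v) = 0 := by
  set G := p * (1 - 2 * v) * (1 - 2 * w) + q * (1 - 2 * w) * (1 - 2 * u)
      + r * (1 - 2 * u) * (1 - 2 * v) with hG
  have ha0 : a ≠ 0 := by rintro rfl; exact hm (by linarith)
  have w₁ : 2 * (b * c) * o₁ = m * (b + c) := by linear_combination c * hb + b * hc + 2 * b * c * ho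
  have w₂ : 2 * (c * a) * o₂ = m * (c + a) := by linear_combination a * hc + c * ha + 2 * c * a * ho
  have w₃ : 2 * (a * b) * o₃ = m * (a + b) := by linear_combination b * ha + a * hb + 2 * a * b * ho
  have t₁ : p * o₂ * (1 - 2 * o₂) = q * o₁ * (1 - 2 * o₁) := by
    linear_combination (q * o₁ - p * o₂) * ho - o₂ * (e₁ - e₂) + (o₂ - o₁) * (e₁ - e₃)
  have t₂ : q * o₃ * (1 - 2 * o₃) = r * o₂ * (1 - 2 * o₂) := by
    linear_combination (r * o₂ - q * o₃) * ho - o₃ * (e₂ - e₃) + (o₃ - o₂) * (e₂ - e₁)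
  have t₃ : r * o₁ * (1 - 2 * o₁) = p * o₃ * (1 - 2 * o₃) := by
    linear_combination (p * o₃ - r * o₁) * ho - o₁ * (e₃ - e₁) + (o₁ - o₃) * (e₃ - e₂)
  have s₁ : p * (c + a) = q * (b + c) := by
    apply mul_left_cancel₀ (pow_ne_zero 2 hm)
    linear_combination 2 * (a * b * c) * t₁ - p * m * w₂ + q * m * w₁
      - 2 * p * (c * a) * o₂ * hb + 2 * q * (b * c) * o₁ * ha
  have s₂ : q * (a + b) = r * (c + a) := by
    apply mul_left_cancel₀ (pow_ne_zero 2 hm)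
    linear_combination 2 * (a * b * c) * t₂ - q * m * w₃ + r * m * w₂
      - 2 * q * (a * b) * o₃ * hc + 2 * r * (c * a) * o₂ * hb
  have s₃ : r * (b + c) = p * (a + b) := by
    apply mul_left_cancel₀ (pow_ne_zero 2 hm)
    linear_combination 2 * (a * b * c) * t₃ - r * m * w₁ + p * m * w₃
      - 2 * r * (b * c) * o₁ * ha + 2 * p * (a * b) * o₃ * hc
  have hN' : (b + c) * (1 - 2 * v) * (1 - 2 * w) + (c + a) * (1 - 2 * w) * (1 - 2 * u)
      + (a + b) * (1 - 2 * u) * (1 - 2 * v) = 0 := by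
    obtain rfl : u = 1 - v - w := by linarith
    linear_combination -2 * hN
  have g₁ : (b + c) * G = 0 := by
    linear_combination p * hN' + (b + c) * hG - (1 - 2 * w) * (1 - 2 * u) * s₁
      + (1 - 2 * u) * (1 - 2 * v) * s₃
  have g₂ : (c + a) * G = 0 := by
    linear_combination q * hN' + (c + a) * hG - (1 - 2 * u) * (1 - 2 * v) * s₂
      + (1 - 2 * v) * (1 - 2 * w) * s₁
  have g₃ : (a + b) * G = 0 := by
    linear_combination r * hN' + (a + b) * hG - (1 - 2 * v) * (1 - 2 * w) * s₃
      + (1 - 2 * w) * (1 - 2 * u) * s₂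
  exact (mul_eq_zero.1 (by linear_combination (g₂ + g₃ - g₁) / 2 : a * G = 0)).resolve_left ha0

theorem Z_on_nine_point_conic
    (A B C P P' Q Q' D E F D₃ E₃ F₃ : Pt) (x y z : ℝ)
    (hABC : AffineIndependent ℝ ![A, B, C])
    (hsum : x + y + z = 1)
    (hPco : P = x • A + y • B + z • C)
    (hx0 : x ≠ 0) (hy0 : y ≠ 0) (hz0 : z ≠ 0)
    (hx1 : x ≠ 1) (hy1 : y ≠ 1) (hz1 : z ≠ 1)
    (hst : x * y + y * z + z * x ≠ 0)
    (hP' : P' = (y * z / (x * y + y * z + z * x)) • A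
        + (x * z / (x * y + y * z + z * x)) • B
        + (x * y / (x * y + y * z + z * x)) • C)
    (hQ : Q = homoth (cent A B C) (-(1 / 2)) P')
    (hQ' : Q' = homoth (cent A B C) (-(1 / 2)) P)
    (hD : Collinear ℝ {A, P, D} ∧ Collinear ℝ {B, C, D})
    (hE : Collinear ℝ {B, P, E} ∧ Collinear ℝ {A, C, E})
    (hF : Collinear ℝ {C, P, F} ∧ Collinear ℝ {A, B, F})
    (hD₃ : Collinear ℝ {A, P', D₃} ∧ Collinear ℝ {B, C, D₃})
    (hE₃ : Collinear ℝ {B, P', E₃} ∧ Collinear ℝ {A, C, E₃})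
    (hF₃ : Collinear ℝ {C, P', F₃} ∧ Collinear ℝ {A, B, F₃})
    (hxy : x ≠ y) (hyz : y ≠ z) (hxz : x ≠ z)
    (O H : Pt)
    (hO : Par (midpoint ℝ B C - O) (D - Q) ∧ Par (midpoint ℝ C A - O) (E - Q) ∧
          Par (midpoint ℝ A B - O) (F - Q))
    (hH : Par (H - A) (D - Q) ∧ Par (H - B) (E - Q) ∧ Par (H - C) (F - Q))
    (H₁ H₂ H₃ : Pt)
    (hH₁ : Collinear ℝ {A, H, H₁} ∧ Collinear ℝ {B, C, H₁})
    (hH₂ : Collinear ℝ {B, H, H₂} ∧ Collinear ℝ {A, C, H₂})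
    (hH₃ : Collinear ℝ {C, H, H₃} ∧ Collinear ℝ {A, B, H₃})
    (NH : Set Pt) (hNHc : IsConic NH)
    (hN1 : midpoint ℝ B C ∈ NH) (hN2 : midpoint ℝ C A ∈ NH) (hN3 : midpoint ℝ A B ∈ NH)
    (hN4 : midpoint ℝ A H ∈ NH) (hN5 : midpoint ℝ B H ∈ NH) (hN6 : midpoint ℝ C H ∈ NH)
    (hN7 : H₁ ∈ NH) (hN8 : H₂ ∈ NH) (hN9 : H₃ ∈ NH)
    (CO : Set Pt)
    (hCO : IsConic CO) (hACO : A ∈ CO) (hBCO : B ∈ CO) (hCCO : C ∈ CO)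
    (hOcen : IsCenterOf O CO)
    (hCOuniq : ∀ S : Set Pt, IsConic S → A ∈ S → B ∈ S → C ∈ S → IsCenterOf O S → S = CO)
    (CP : Set Pt) (Z : Pt)
    (hCPc : IsConic CP) (hACP : A ∈ CP) (hBCP : B ∈ CP) (hCCP : C ∈ CP)
    (hPCP : P ∈ CP) (hQCP : Q ∈ CP)
    (hCPuniq : ∀ S : Set Pt, IsConic S → A ∈ S → B ∈ S → C ∈ S → P ∈ S → Q ∈ S → S = CP)
    (hZ : IsCenterOf Z CP) (hZuniq : ∀ W : Pt, IsCenterOf W CP → W = Z) :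
    Z ∈ NH ∧ homoth (cent A B C) (-2) Z ∈ CO := by
  have hd := cross_ne_zero_of_affineIndependent hABC
  have hdB : cross (C - B) (A - B) ≠ 0 := by rwa [cross_rotate]
  have hdC : cross (A - C) (B - C) ≠ 0 := by rwa [cross_rotate]
  obtain ⟨s, hs⟩ : ∃ s, s = x * y + y * z + z * x := ⟨_, rfl⟩
  rw [← hs] at hst hP'
  have hP : P = bary A B C x y z := hPco
  have hQb : Q = bary A B C (x * (y + z) / (2 * s)) (y * (z + x) / (2 * s))
      (z * (x + y) / (2 * s)) := by
    rw [hQ, hP']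
    ext <;> simp [homoth, cent, bary] <;> field_simp <;> rw [hs] <;> ring
  obtain ⟨h₁, h₂, h₃, hh, hHb⟩ := exists_bary hd H
  obtain ⟨o₁, o₂, o₃, ho, hOb⟩ := exists_bary hd O
  obtain ⟨u, v, w, hu, hZb⟩ := exists_bary hd Z
  have parA {u v w : ℝ} (h0 : u + v + w = 0) (h : Par (bary A B C u v w) (D - Q)) :=
    par_trace_sub_isotomcomplement hd hsum hx1 hs hst hQb (hP ▸ hD) h0 h
  have parB {u v w : ℝ} (h0 : u + v + w = 0) (h : Par (bary A B C u v w) (E - Q)) :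
      w * (x * (z ^ 2 - s)) = u * (z * (x ^ 2 - s)) :=
    par_trace_sub_isotomcomplement (D := E) (Q := Q) hdB (by linarith) hy1 (by rw [hs]; ring) hst
      (hQb.trans (bary_rotate A B C _ _ _).symm)
      (by rw [bary_rotate, ← hP, Set.insert_comm C]; exact hE)
      (show v + w + u = 0 by linarith) (by rwa [bary_rotate])
  have parC {u v w : ℝ} (h0 : u + v + w = 0) (h : Par (bary A B C u v w) (F - Q)) :
      u * (y * (x ^ 2 - s)) = v * (x * (y ^ 2 - s)) :=
    par_trace_sub_isotomcomplement (D := F) (Q := Q) hdC (by linarith) hz1 (by rw [hs]; ring) hst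
      ((hQb.trans (bary_rotate A B C _ _ _).symm).trans (bary_rotate B C A _ _ _).symm)
      (by rw [bary_rotate, bary_rotate, ← hP]; exact hF)
      (show w + u + v = 0 by linarith) (by rwa [bary_rotate, bary_rotate])
  have eH₁ : h₂ * (z * (y ^ 2 - s)) = h₃ * (y * (z ^ 2 - s)) :=
    parA (u := h₁ - 1) (by linarith) (by rw [← bary_sub_left, ← hHb]; exact hH.1)
  have eH₂ : h₃ * (x * (z ^ 2 - s)) = h₁ * (z * (x ^ 2 - s)) := by
    refine parB (v := h₂ - 1) (by linarith) ?_
    rw [← bary_rotate, ← bary_sub_left, bary_rotate, ← hHb]; exact hH.2.1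
  have eH₃ : h₁ * (y * (x ^ 2 - s)) = h₂ * (x * (y ^ 2 - s)) := by
    refine parC (w := h₃ - 1) (by linarith) ?_
    rw [← bary_rotate, ← bary_rotate, ← bary_sub_left, bary_rotate, bary_rotate, ← hHb]
    exact hH.2.2
  have eO₁ := parA (u := 0 - o₁) (v := 1 / 2 - o₂) (w := 1 / 2 - o₃) (by linarith)
    (by rw [← bary_sub, ← midpoint_eq_bary, ← hOb]; exact hO.1)
  have eO₂ := parB (u := 1 / 2 - o₁) (v := 0 - o₂) (w := 1 / 2 - o₃) (by linarith)
    (by rw [← bary_sub, ← bary_rotate, ← midpoint_eq_bary, ← hOb]; exact hO.2.1)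
  have eO₃ := parC (u := 1 / 2 - o₁) (v := 1 / 2 - o₂) (w := 0 - o₃) (by linarith)
    (by rw [← bary_sub, ← bary_rotate A B C (1 / 2), ← bary_rotate B C A (1 / 2),
      ← midpoint_eq_bary, ← hOb]; exact hO.2.2)
  have hne : 4 * s * (x * y * z) ≠ 0 := by positivity
  have k₁ := coord_of_cevians hh hsum hs eH₂ eH₃
  have k₂ : 4 * s * (x * y * z) * h₂ = y * (z ^ 2 - s) * (x ^ 2 - s) := by
    rw [← coord_of_cevians (by linarith) (by linarith) (by rw [hs]; ring) eH₃ eH₁]; ring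
  have k₃ : 4 * s * (x * y * z) * h₃ = z * (x ^ 2 - s) * (y ^ 2 - s) := by
    rw [← coord_of_cevians (by linarith) (by linarith) (by rw [hs]; ring) eH₁ eH₂]; ring
  have ho' : (1 - 2 * o₁) + (1 - 2 * o₂) + (1 - 2 * o₃) = 1 := by linarith
  have l₁ : h₁ = 1 - 2 * o₁ := by
    apply mul_left_cancel₀ hne
    rw [k₁, coord_of_cevians ho' hsum hs (by linear_combination 2 * eO₂)
      (by linear_combination 2 * eO₃)]
  have l₂ : h₂ = 1 - 2 * o₂ := by
    apply mul_left_cancel₀ hne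
    rw [k₂, ← coord_of_cevians (h₁ := 1 - 2 * o₂) (h₂ := 1 - 2 * o₃) (h₃ := 1 - 2 * o₁)
      (by linarith) (by linarith) (by rw [hs]; ring) (by linear_combination 2 * eO₃)
      (by linear_combination 2 * eO₁)]
    ring
  have l₃ : h₃ = 1 - 2 * o₃ := by linarith
  have hX : x ^ 2 - s ≠ 0 := by
    intro h0
    have g₂ : h₂ = 0 := (mul_eq_zero.1 (k₂.trans (by rw [h0]; ring))).resolve_left hne
    have g₃ : h₃ = 0 := (mul_eq_zero.1 (k₃.trans (by rw [h0]; ring))).resolve_left hne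
    have hOm : O = midpoint ℝ B C := by
      rw [hOb, midpoint_eq_bary A]; congr 1 <;> linarith
    exact not_unique_circumconic_center_midpoint hd (hOm ▸ hCOuniq)
  have hY : y ^ 2 - s ≠ 0 := by
    intro h0
    have g₁ : h₁ = 0 := (mul_eq_zero.1 (k₁.trans (by rw [h0]; ring))).resolve_left hne
    have g₃ : h₃ = 0 := (mul_eq_zero.1 (k₃.trans (by rw [h0]; ring))).resolve_left hne
    have hOm : O = midpoint ℝ C A := by
      rw [hOb, midpoint_eq_bary B, bary_rotate A B C]; congr 1 <;> linarith
    exact not_unique_circumconic_center_midpoint hdB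
      fun S h hB hC hA hcen => hCOuniq S h hA hB hC (hOm ▸ hcen)
  have hZ0 : z ^ 2 - s ≠ 0 := by
    intro h0
    have g₁ : h₁ = 0 := (mul_eq_zero.1 (k₁.trans (by rw [h0]; ring))).resolve_left hne
    have g₂ : h₂ = 0 := (mul_eq_zero.1 (k₂.trans (by rw [h0]; ring))).resolve_left hne
    have hOm : O = midpoint ℝ A B := by
      rw [hOb, midpoint_eq_bary C, bary_rotate B C A, bary_rotate A B C]; congr 1 <;> linarith
    exact not_unique_circumconic_center_midpoint hdC
      fun S h hC hA hB hcen => hCOuniq S h hA hB hC (hOm ▸ hcen)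
  obtain ⟨m, hm⟩ : ∃ m, m = (x ^ 2 - s) * (y ^ 2 - s) * (z ^ 2 - s) / (4 * s) := ⟨_, rfl⟩
  have hm0 : m ≠ 0 := by rw [hm]; positivity
  have ha : y * z * (x ^ 2 - s) * h₁ = m := by
    rw [hm, eq_div_iff (by positivity)]
    apply mul_left_cancel₀ hx0
    linear_combination (x ^ 2 - s) * k₁
  have hb : z * x * (y ^ 2 - s) * h₂ = m := by
    rw [hm, eq_div_iff (by positivity)]
    apply mul_left_cancel₀ hy0
    linear_combination (y ^ 2 - s) * k₂
  have hc : x * y * (z ^ 2 - s) * h₃ = m := by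
    rw [hm, eq_div_iff (by positivity)]
    apply mul_left_cancel₀ hz0
    linear_combination (z ^ 2 - s) * k₃
  obtain ⟨cP, -, rfl⟩ := hCPc
  obtain ⟨cN, -, rfl⟩ := hNHc
  obtain ⟨cO, -, rfl⟩ := hCO
  simp only [Set.mem_ofPred_eq] at *
  have hN : y * z * (x ^ 2 - s) * u ^ 2 + z * x * (y ^ 2 - s) * v ^ 2 + x * y * (z ^ 2 - s) * w ^ 2
      - (z * x * (y ^ 2 - s) + x * y * (z ^ 2 - s)) * v * w
      - (x * y * (z ^ 2 - s) + y * z * (x ^ 2 - s)) * w * u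
      - (y * z * (x ^ 2 - s) + z * x * (y ^ 2 - s)) * u * v = 0 := by
    obtain ⟨e₁, e₂, e₃⟩ := center_equations hACP hBCP hCCP hu rfl rfl rfl (hZb ▸ hZ)
    rw [hP, qval_bary _ _ _ _ hsum, hACP, hBCP, hCCP] at hPCP
    rw [hQb, qval_bary _ _ _ _ (by field_simp; rw [hs]; ring), hACP, hBCP, hCCP] at hQCP
    refine center_mem_nine_point_form hsum hx0 hy0 hz0 hx1 hy1 hz1 hxy hyz hxz
      (by linear_combination -hPCP) (by field_simp at hQCP; linear_combination -hQCP) ?_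
      e₁ e₂ e₃ s hs
    rintro ⟨hp, hq, hr⟩
    have hall (W : Pt) : qval cP W = 0 := by
      obtain ⟨u', v', w', hu', rfl⟩ := exists_bary hd W
      rw [qval_bary _ _ _ _ hu', hACP, hBCP, hCCP, hp, hq, hr]; ring
    have hcen (W : Pt) : W = Z := hZuniq W fun p _ => hall _
    apply hd
    rw [hcen A, hcen B]; simp [cross]
  constructor
  · have f₁ := foot_condition hd hh hN1 (hHb ▸ hH₁) hN7
    have f₂ := foot_condition (h₁ := h₂) (h₂ := h₃) (h₃ := h₁) hdB (by linarith) hN2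
      (by rw [bary_rotate, ← hHb, Set.insert_comm C]; exact hH₂) hN8
    have f₃ := foot_condition (h₁ := h₃) (h₂ := h₁) (h₃ := h₂) hdC (by linarith) hN3
      (by rw [bary_rotate, bary_rotate, ← hHb]; exact hH₃) hN9
    have m₁ := midpoint_condition hh hN1 hN2 hN3 f₁ (hHb ▸ hN4)
    have m₂ := midpoint_condition (h₁ := h₂) (by linarith) hN2 hN3 hN1 f₂
      (by rwa [bary_rotate, ← hHb])
    obtain ⟨r₁, r₂⟩ := weights_eq hh f₁ f₂ f₃ m₁ m₂
    rw [hZb, qval_bary _ _ _ _ hu, qform_eq_of_midpoint hN1, qform_eq_of_midpoint hN2,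
      qform_eq_of_midpoint hN3]
    apply (mul_eq_zero.1 (?_ : m * _ = 0)).resolve_left hm0
    have qA : m * qval cN A = y * z * (x ^ 2 - s) * (qval cN A * h₁) := by rw [← ha]; ring
    have qB : m * qval cN B = z * x * (y ^ 2 - s) * (qval cN A * h₁) := by rw [r₁, ← hb]; ring
    have qC : m * qval cN C = x * y * (z ^ 2 - s) * (qval cN A * h₁) := by rw [r₂, ← hc]; ring
    obtain rfl : u = 1 - v - w := by linarith
    linear_combination (qval cN A * h₁) * hN
      + (1 - v - w - 2 * w * (1 - v - w) - 2 * (1 - v - w) * v) * qA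
      + (v - 2 * v * w - 2 * (1 - v - w) * v) * qB
      + (w - 2 * v * w - 2 * w * (1 - v - w)) * qC
  · obtain ⟨e₁, e₂, e₃⟩ := center_equations hACO hBCO hCCO ho rfl rfl rfl (hOb ▸ hOcen)
    have hK : homoth (cent A B C) (-2) Z = bary A B C (1 - 2 * u) (1 - 2 * v) (1 - 2 * w) := by
      rw [hZb]; simp only [homoth, cent, bary]; module
    have := anticomplement_mem_circumconic_form ho hu hm0 (l₁ ▸ ha) (l₂ ▸ hb) (l₃ ▸ hc)
      e₁ e₂ e₃ hN
    rw [hK, qval_bary _ _ _ _ (by linarith), hACO, hBCO, hCCO]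
    linear_combination -this
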